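/- The joint posterior kernel p(β, σ², v^{-1} | y) ∝ (σ²)^{-((n+p)/2+1)} ∏_j v_j^{-1/2-η} exp(−[(y−Xβ)'(y−Xβ) + β'V^{-1}β]/(2σ²)) exp(−μ Σ_j v_j^{-1}) is finitely integrable over β ∈ R^p, σ² ∈ (0,∞), and v_1^{-1},...,v_p^{-1} ∈ (0,∞), provided μ > 0, η > -1/2, X'X is positive definite, and y'y − y'X(X'X)^{-1}X'y > 0; hence the posterior distribution is proper. -/

import Mathlib

open Matrix MeasureTheory Set

/-!
The residual sum of squares is bounded below by some `r > 0`, because `y` has positive distance to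
the column space of `X`. Replacing it by `r` makes the `β j` independent centred Gaussians with
variances `s / w j`, where `s = σ²` and `w j = 1 / v j`. Integrating them out multiplies the rest by
a constant times `s ^ (p / 2) * ∏ j, w j ^ (-1 / 2)`, and what remains is an inverse gamma kernel in
`s` of shape `n / 2` times independent gamma kernels `w j ^ η * exp (-μ * w j)`.
-/

section

variable {ι : Type*} [Fintype ι]

theorem integrableOn_rpow_neg_mul_exp_neg_div {a c : ℝ} (ha : 0 < a) (hc : 0 < c) :
    IntegrableOn (fun s : ℝ => s ^ (-(a + 1)) * Real.exp (-c / s)) (Ioi 0) := by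
  have h_gamma : IntegrableOn (fun t : ℝ => t ^ (a - 1) * Real.exp (-c * t)) (Ioi 0) := by
    simpa using integrableOn_rpow_mul_exp_neg_mul_rpow (s := a - 1) (by linarith) one_pos hc
  refine ((integrableOn_Ioi_comp_rpow_iff _ (by norm_num : (-1 : ℝ) ≠ 0)).2 h_gamma).congr_fun
    (fun s (hs : 0 < s) => ?_) measurableSet_Ioi
  have h_pow : s ^ (-(a + 1)) = s ^ (-1 - 1 : ℝ) * (s ^ (-1 : ℝ)) ^ (a - 1) := by
    rw [← Real.rpow_mul hs.le, ← Real.rpow_add hs]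
    ring_nf
  simp only [h_pow, Real.rpow_neg_one, smul_eq_mul, abs_neg, abs_one, one_mul, mul_assoc,
    div_eq_mul_inv]

theorem integrableOn_prod_rpow_mul_exp_neg_mul_sum {q μ : ℝ} (hq : -1 < q) (hμ : 0 < μ) :
    IntegrableOn (fun w : ι → ℝ => (∏ j, w j ^ q) * Real.exp (-μ * ∑ j, w j))
      (univ.pi fun _ => Ioi 0) := by
  have h_gamma : IntegrableOn (fun t : ℝ => t ^ q * Real.exp (-μ * t)) (Ioi 0) := by
    simpa using integrableOn_rpow_mul_exp_neg_mul_rpow hq one_pos hμ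
  rw [IntegrableOn, volume_pi, Measure.restrict_pi_pi]
  simpa only [Finset.prod_mul_distrib, Finset.mul_sum, Real.exp_sum] using
    Integrable.fintype_prod fun _ : ι => h_gamma

theorem integrable_mul_prod_exp_neg_mul_sq {T : Type*} [MeasurableSpace T] {ν : Measure T}
    [SFinite ν] {f : T → ℝ} {b : T → ι → ℝ} (hf : AEStronglyMeasurable f ν) (hb : Measurable b)
    (hb_pos : ∀ᵐ t ∂ν, ∀ j, 0 < b t j)
    (h : Integrable (fun t => f t * ∏ j, √(Real.pi / b t j)) ν) :
    Integrable (fun z : (ι → ℝ) × T => f z.2 * ∏ j, Real.exp (-b z.2 j * z.1 j ^ 2))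
      (volume.prod ν) := by
  have h_exp : Measurable fun z : (ι → ℝ) × T => ∏ j, Real.exp (-b z.2 j * z.1 j ^ 2) := by
    fun_prop
  refine (integrable_prod_iff' (hf.comp_snd.fun_mul h_exp.aestronglyMeasurable)).2 ⟨?_, ?_⟩
  · filter_upwards [hb_pos] with t ht
    exact (Integrable.fintype_prod fun j => integrable_exp_neg_mul_sq (ht j)).const_mul _
  · refine h.norm.congr (ae_of_all _ fun t => ?_)
    simp only [norm_mul, norm_prod, Real.norm_of_nonneg (Real.exp_nonneg _),
      Real.norm_of_nonneg (Real.sqrt_nonneg _), integral_const_mul,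
      integral_fintype_prod_volume_eq_prod (fun j x => Real.exp (-b t j * x ^ 2)),
      integral_gaussian]

theorem norm_sq_le_dotProduct_self {m : Type*} [Fintype m] (u : m → ℝ) : ‖u‖ ^ 2 ≤ u ⬝ᵥ u := by
  have h_nonneg : 0 ≤ u ⬝ᵥ u := by simpa using dotProduct_star_self_nonneg u
  rw [← Real.le_sqrt (norm_nonneg _) h_nonneg, pi_norm_le_iff_of_nonneg (Real.sqrt_nonneg _)]
  refine fun i => Real.abs_le_sqrt ?_
  simpa only [sq, dotProduct] using Finset.single_le_sum (f := fun i => u i * u i)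
    (fun i _ => mul_self_nonneg _) (Finset.mem_univ i)

theorem exists_pos_le_residual_of_notMem_range {m : Type*} [Fintype m]
    {X : Matrix m ι ℝ} {y : m → ℝ} (hy : y ∉ range X.mulVec) :
    ∃ r > 0, ∀ β, r ≤ (y - X *ᵥ β) ⬝ᵥ (y - X *ᵥ β) := by
  have h_closed : IsClosed (range X.mulVec) :=
    (LinearMap.range X.mulVecLin).closed_of_finiteDimensional
  have h_dist := (h_closed.notMem_iff_infDist_pos (range_nonempty _)).1 hy
  refine ⟨_, pow_pos h_dist 2, fun β => (pow_le_pow_left₀ h_dist.le ?_ 2).trans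
    (norm_sq_le_dotProduct_self _)⟩
  rw [← dist_eq_norm]
  exact Metric.infDist_le_dist_of_mem (mem_range_self β)

theorem hat_mulVec_of_mem_range {R m : Type*} [CommRing R] [Fintype m] [DecidableEq ι]
    {X : Matrix m ι R} {y : m → R} (hX : IsUnit (Xᵀ * X)) (hy : y ∈ range X.mulVec) :
    (X * (Xᵀ * X)⁻¹ * Xᵀ) *ᵥ y = y := by
  obtain ⟨β, rfl⟩ := hy
  rw [mulVec_mulVec, Matrix.mul_assoc, Matrix.mul_assoc,
    nonsing_inv_mul _ ((isUnit_iff_isUnit_det _).1 hX), Matrix.mul_one]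

theorem prod_rpow_half_add_mul_prod_sqrt {s η : ℝ} {w : ι → ℝ} (hs : 0 < s)
    (hw : ∀ j, 0 < w j) :
    (∏ j, w j ^ (1 / 2 + η)) * ∏ j, √(Real.pi / (w j / (2 * s))) =
      √(2 * Real.pi) ^ Fintype.card ι * s ^ (Fintype.card ι / 2 : ℝ) * ∏ j, w j ^ η := by
  have h_factor (j : ι) :
      w j ^ (1 / 2 + η) * √(Real.pi / (w j / (2 * s))) = √(2 * Real.pi) * √s * w j ^ η := by
    have h_sqrt : 0 < √(w j) := Real.sqrt_pos.2 (hw j)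
    rw [div_div_eq_mul_div, ← mul_assoc, mul_comm Real.pi, Real.sqrt_div' _ (hw j).le,
      Real.sqrt_mul (by positivity), Real.rpow_add (hw j), ← Real.sqrt_eq_rpow]
    field_simp
  have h_pow : √s ^ Fintype.card ι = s ^ (Fintype.card ι / 2 : ℝ) := by
    rw [Real.sqrt_eq_rpow, ← Real.rpow_mul_natCast hs.le, one_div_mul_eq_div]
  rw [← Finset.prod_mul_distrib, Finset.prod_congr rfl fun j _ => h_factor j,
    Finset.prod_mul_distrib, Finset.prod_const, Finset.card_univ, mul_pow, h_pow]

theorem integrableOn_gaussian_scale_mixture {a c μ η : ℝ} (ha : 0 < a) (hc : 0 < c)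
    (hμ : 0 < μ) (hη : -1 < η) :
    IntegrableOn
      (fun z : (ι → ℝ) × ℝ × (ι → ℝ) =>
        z.2.1 ^ (-(a + Fintype.card ι / 2 + 1)) * Real.exp (-c / z.2.1) *
          ((∏ j, z.2.2 j ^ (1 / 2 + η)) * Real.exp (-μ * ∑ j, z.2.2 j)) *
          ∏ j, Real.exp (-(z.2.2 j / (2 * z.2.1)) * z.1 j ^ 2))
      (univ ×ˢ (Ioi 0 ×ˢ univ.pi fun _ => Ioi 0)) := by
  have h_dom : MeasurableSet (Ioi (0 : ℝ) ×ˢ univ.pi fun _ : ι => Ioi (0 : ℝ)) :=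
    measurableSet_Ioi.prod (.univ_pi fun _ => measurableSet_Ioi)
  have h_marginal := ((integrableOn_rpow_neg_mul_exp_neg_div ha hc).mul_prod
    (integrableOn_prod_rpow_mul_exp_neg_mul_sum (ι := ι) hη hμ)).const_mul
      (√(2 * Real.pi) ^ Fintype.card ι)
  rw [Measure.prod_restrict] at h_marginal
  rw [IntegrableOn, Measure.volume_eq_prod, ← Measure.prod_restrict, Measure.restrict_univ]
  refine integrable_mul_prod_exp_neg_mul_sq (b := fun t j => t.2 j / (2 * t.1))
    (f := fun t : ℝ × (ι → ℝ) => t.1 ^ (-(a + Fintype.card ι / 2 + 1)) * Real.exp (-c / t.1) *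
      ((∏ j, t.2 j ^ (1 / 2 + η)) * Real.exp (-μ * ∑ j, t.2 j)))
    (Measurable.aestronglyMeasurable (by fun_prop)) (by fun_prop) ?_ (h_marginal.congr ?_)
  · filter_upwards [ae_restrict_mem h_dom] with t ⟨hs, hw⟩ j
    exact div_pos (hw j trivial) (mul_pos two_pos hs)
  · filter_upwards [ae_restrict_mem h_dom] with ⟨s, w⟩ ⟨(hs : 0 < s), hw⟩
    have h_pow : s ^ (-(a + 1)) =
        s ^ (-(a + Fintype.card ι / 2 + 1)) * s ^ (Fintype.card ι / 2 : ℝ) := by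
      rw [← Real.rpow_add hs]
      ring_nf
    have h_prod := prod_rpow_half_add_mul_prod_sqrt (η := η) hs fun j => hw j trivial
    simp only [h_pow]
    linear_combination (-s ^ (-(a + Fintype.card ι / 2 + 1)) * Real.exp (-c / s) *
      Real.exp (-μ * ∑ j, w j)) * h_prod

theorem integrableOn_posterior_of_le {Q : (ι → ℝ) → ℝ} {a r μ η : ℝ} (hQ : Measurable Q)
    (hr : 0 < r) (hrQ : ∀ β, r ≤ Q β) (ha : 0 < a) (hμ : 0 < μ) (hη : -1 < η) :
    IntegrableOn
      (fun z : (ι → ℝ) × ℝ × (ι → ℝ) =>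
        z.2.1 ^ (-(a + Fintype.card ι / 2 + 1)) * (∏ j, z.2.2 j ^ (1 / 2 + η)) *
          Real.exp (-(Q z.1 + ∑ j, z.2.2 j * z.1 j ^ 2) / (2 * z.2.1)) *
          Real.exp (-μ * ∑ j, z.2.2 j))
      (univ ×ˢ (Ioi 0 ×ˢ univ.pi fun _ => Ioi 0)) := by
  refine (integrableOn_gaussian_scale_mixture ha (half_pos hr) hμ hη).mono'
    (Measurable.aestronglyMeasurable (by fun_prop)) ?_
  have h_dom : MeasurableSet ((univ : Set (ι → ℝ)) ×ˢ
      (Ioi (0 : ℝ) ×ˢ univ.pi fun _ : ι => Ioi (0 : ℝ))) :=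
    .prod .univ (measurableSet_Ioi.prod (.univ_pi fun _ => measurableSet_Ioi))
  filter_upwards [ae_restrict_mem h_dom] with ⟨β, s, w⟩ ⟨_, (hs : 0 < s), hw⟩
  have h_prod : 0 ≤ ∏ j, w j ^ (1 / 2 + η) :=
    Finset.prod_nonneg fun j _ => Real.rpow_nonneg (hw j trivial).le _
  have h_exp : Real.exp (-(Q β + ∑ j, w j * β j ^ 2) / (2 * s)) ≤
      Real.exp (-(r / 2) / s) * ∏ j, Real.exp (-(w j / (2 * s)) * β j ^ 2) := by
    have h_exponent : -(Q β + ∑ j, w j * β j ^ 2) / (2 * s) =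
        -Q β / (2 * s) + ∑ j, -(w j / (2 * s)) * β j ^ 2 := by
      rw [neg_add, add_div, ← Finset.sum_neg_distrib, Finset.sum_div]
      congr! 2
      ring
    rw [h_exponent, Real.exp_add, Real.exp_sum, neg_div', div_div]
    gcongr
    exact hrQ β
  rw [Real.norm_of_nonneg (by positivity)]
  calc
    _ ≤ s ^ (-(a + Fintype.card ι / 2 + 1)) * (∏ j, w j ^ (1 / 2 + η)) *
        (Real.exp (-(r / 2) / s) * ∏ j, Real.exp (-(w j / (2 * s)) * β j ^ 2)) *
        Real.exp (-μ * ∑ j, w j) := by gcongr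
    _ = _ := by ring

theorem stmt_7_general {m : Type*} [Fintype m] (X : Matrix m ι ℝ) (y : m → ℝ)
    (μ η : ℝ) (hμ : 0 < μ) (hη : -1 < η) (hy : y ∉ range X.mulVec) :
    IntegrableOn
      (fun z : (ι → ℝ) × ℝ × (ι → ℝ) =>
        z.2.1 ^ (-((Fintype.card m + Fintype.card ι : ℝ) / 2 + 1)) *
          (∏ j, z.2.2 j ^ ((1 : ℝ) / 2 + η)) *
          Real.exp (-(((y - X *ᵥ z.1) ⬝ᵥ (y - X *ᵥ z.1)) +
            ∑ j, z.2.2 j * (z.1 j) ^ 2) / (2 * z.2.1)) *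
          Real.exp (-μ * ∑ j, z.2.2 j))
      (univ ×ˢ (Ioi 0 ×ˢ univ.pi fun _ => Ioi 0)) volume := by
  obtain ⟨r, hr, h_residual⟩ := exists_pos_le_residual_of_notMem_range hy
  have : Nonempty m := by
    by_contra! h_empty
    exact hy ⟨0, Subsingleton.elim _ _⟩
  have h_card : (0 : ℝ) < Fintype.card m / 2 := by positivity
  have h_meas : Measurable fun β => (y - X *ᵥ β) ⬝ᵥ (y - X *ᵥ β) := by
    simp only [dotProduct, mulVec, Pi.sub_apply]
    fun_prop
  simpa only [add_div] using integrableOn_posterior_of_le h_meas hr h_residual h_card hμ hη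

end

theorem stmt_7 {n p : ℕ} (X : Matrix (Fin n) (Fin p) ℝ) (y : Fin n → ℝ)
    (μ η : ℝ) (hμ : 0 < μ) (hη : -1/2 < η)
    (hpd : (Xᵀ * X).PosDef)
    (hrss : 0 < y ⬝ᵥ y - y ⬝ᵥ (X * (Xᵀ * X)⁻¹ * Xᵀ) *ᵥ y) :
    IntegrableOn
      (fun z : (Fin p → ℝ) × ℝ × (Fin p → ℝ) =>
        z.2.1 ^ (-((n + p : ℝ) / 2 + 1)) *
          (∏ j, z.2.2 j ^ ((1:ℝ)/2 + η)) *
          Real.exp (-(((y - X *ᵥ z.1) ⬝ᵥ (y - X *ᵥ z.1)) +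
            ∑ j, z.2.2 j * (z.1 j) ^ 2) / (2 * z.2.1)) *
          Real.exp (-μ * ∑ j, z.2.2 j))
      (univ ×ˢ (Ioi 0 ×ˢ univ.pi fun _ => Ioi 0)) volume := by
  have hy : y ∉ range X.mulVec := fun hy => by
    simp [hat_mulVec_of_mem_range hpd.isUnit hy] at hrss
  simpa only [Fintype.card_fin] using stmt_7_general X y μ η hμ (by linarith) hy
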